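/- Let k ≥ 3 be odd, a = (k+1)/2, and let L ⊆ ℤ⁴ be the ℤ-span of v₁ = (-a+1, a+1, -a+1, a), v₂ = (a+1, a+1, -a+2, a-1), v₃ = (-a-1, a-1, a-1, -a), v₄ = (-a, a, a, a-1). Then for every x ∈ ℤ⁴ there exists w ∈ L with ‖x - w‖₁ ≤ k, where ‖y‖₁ = |y₁| + |y₂| + |y₃| + |y₄|. (Equivalently, S_k + L = ℤ⁴, where S_k is the set of points of ℤ⁴ at l¹-distance at most k from the origin.) -/

import Mathlib

/-- `x` is at `l¹`-distance at least `2a` from every point of the lattice. -/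
def Uncovered (a x0 x1 x2 x3 : ℤ) : Prop :=
  ∀ c1 c2 c3 c4 : ℤ, 2 * a ≤
    |x0 - (c1 * (-a + 1) + c2 * (a + 1) + c3 * (-a - 1) + c4 * (-a))| +
    |x1 - (c1 * (a + 1) + c2 * (a + 1) + c3 * (a - 1) + c4 * a)| +
    |x2 - (c1 * (-a + 1) + c2 * (-a + 2) + c3 * (a - 1) + c4 * a)| +
    |x3 - (c1 * a + c2 * (a - 1) + c3 * (-a) + c4 * (a - 1))|

theorem Uncovered.max {a x0 x1 x2 x3 : ℤ} (h : Uncovered a x0 x1 x2 x3) (c1 c2 c3 c4 : ℤ) :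
    ∃ z0 z1 z2 z3 : ℤ, 2 * a ≤ Max.max z0 (-z0) + Max.max z1 (-z1) + Max.max z2 (-z2) +
        Max.max z3 (-z3) ∧
      z0 = x0 - (c1 * (-a + 1) + c2 * (a + 1) + c3 * (-a - 1) + c4 * (-a)) ∧
      z1 = x1 - (c1 * (a + 1) + c2 * (a + 1) + c3 * (a - 1) + c4 * a) ∧
      z2 = x2 - (c1 * (-a + 1) + c2 * (-a + 2) + c3 * (a - 1) + c4 * a) ∧
      z3 = x3 - (c1 * a + c2 * (a - 1) + c3 * (-a) + c4 * (a - 1)) := by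
  refine ⟨_, _, _, _, ?_, rfl, rfl, rfl, rfl⟩
  simpa only [abs_eq_max_neg] using h c1 c2 c3 c4

theorem Uncovered.neg {a x0 x1 x2 x3 : ℤ} (h : Uncovered a x0 x1 x2 x3) :
    Uncovered a (-x0) (-x1) (-x2) (-x3) := by
  intro c1 c2 c3 c4
  have := h (-c1) (-c2) (-c3) (-c4)
  rw [← abs_neg (x0 - _), ← abs_neg (x1 - _), ← abs_neg (x2 - _), ← abs_neg (x3 - _)] at this
  convert this using 5 <;> ring

set_option maxHeartbeats 2000000 in
theorem orthant_pppp (a x0 x1 x2 x3 : ℤ) (ha : 2 ≤ a) (h : Uncovered a x0 x1 x2 x3)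
    (h0 : 0 ≤ x0) (h1 : 0 ≤ x1) (h2 : 0 ≤ x2) (h3 : 0 ≤ x3)
    (hs : x0 + x1 + x2 + x3 = 2 * a) : False := by
  obtain ⟨g0, g1, g2, g3, g4, g5, g6, g7, g8, g9, g10, g11⟩ :
      (2 * (min x3 (3 * a)) ≤ 6 * a - 5) ∧
      (2 * (min x1 (2 * a) + min x2 (1)) ≤ 2 * a + 2) ∧
      (2 * (min x2 (2 * a - 1)) ≤ 2 * a + 2) ∧
      (2 * (min x0 (1) + min x1 (1) + min x2 (1) + min x3 (2 * a - 1)) ≤ 2 * a + 2) ∧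
      (2 * (min x0 (2 * a) + min x2 (1)) ≤ 2 * a + 2) ∧
      (2 * (min x0 (a + 1) + min x3 (a)) ≤ 4 * a - 1) ∧
      (2 * (min x2 (2 * a) + min x3 (2 * a - 2)) ≤ 4 * a - 2) ∧
      (2 * (min x1 (a + 1) + min x3 (a)) ≤ 4 * a - 1) ∧
      (2 * (min x1 (a) + min x2 (a) + min x3 (a - 1)) ≤ 4 * a - 1) ∧
      (2 * (min x0 (a + 1) + min x1 (a + 1) + min x3 (a - 1)) ≤ 4 * a - 1) ∧
      (2 * (min x0 (a) + min x2 (a) + min x3 (a - 1)) ≤ 4 * a - 1) ∧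
      (2 * (min x0 (a) + min x1 (a) + min x2 (a + 1) + min x3 (a - 2)) ≤ 4 * a - 1) := by
    and_intros
    · grind [h.max 1 (-1) (-2) 1]
    · grind [h.max 0 1 1 0]
    · grind [h.max (-1) 0 0 1]
    · grind [h.max 0 0 (-1) 1]
    · grind [h.max (-1) 1 0 0]
    · grind [h.max 0 0 (-1) 0]
    · grind [h.max (-1) 0 (-1) 2]
    · grind [h.max 1 0 0 0]
    · grind [h.max 0 0 0 1]
    · grind [h.max 0 1 0 0]
    · grind [h.max (-1) 0 (-1) 1]
    · grind [h.max (-1) 1 0 1]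
  clear h
  grind (splits := 60)

set_option maxHeartbeats 2000000 in
theorem orthant_pppn (a x0 x1 x2 x3 : ℤ) (ha : 2 ≤ a) (h : Uncovered a x0 x1 x2 x3)
    (h0 : 0 ≤ x0) (h1 : 0 ≤ x1) (h2 : 0 ≤ x2) (h3 : x3 ≤ 0)
    (hs : x0 + x1 + x2 + (-x3) = 2 * a) : False := by
  obtain ⟨g0, g1, g2, g3, g4, g5, g6, g7, g8, g9⟩ :
      (2 * (min x2 (2 * a)) ≤ 4 * a - 2) ∧
      (2 * (min x1 (2 * a) + min x2 (1) + min (-x3) (1)) ≤ 2 * a + 2) ∧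
      (2 * (min x2 (2 * a - 1) + min (-x3) (1)) ≤ 2 * a + 2) ∧
      (2 * (min (-x3) (2 * a - 1)) ≤ 2 * a + 2) ∧
      (2 * (min x0 (2 * a) + min x2 (1) + min (-x3) (1)) ≤ 2 * a + 2) ∧
      (2 * (min x0 (a + 1) + min x1 (a + 1)) ≤ 4 * a - 1) ∧
      (2 * (min x0 (a) + min x1 (a) + min (-x3) (a)) ≤ 4 * a - 1) ∧
      (2 * (min x0 (a) + min x1 (a) + min x2 (a + 1)) ≤ 4 * a - 1) ∧
      (2 * (min x0 (a - 1) + min x1 (a - 1) + min x2 (a) + min (-x3) (a + 1)) ≤ 4 * a - 1) ∧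
      (2 * (min x0 (a - 2) + min x1 (a - 2) + min x2 (a - 1) + min (-x3) (3 * a)) ≤ 6 * a - 5) := by
    and_intros
    · grind [h.max (-1) 0 (-1) 2]
    · grind [h.max 0 1 1 0]
    · grind [h.max (-1) 0 0 1]
    · grind [h.max 0 0 1 (-1)]
    · grind [h.max (-1) 1 0 0]
    · grind [h.max 0 1 0 0]
    · grind [h.max 0 1 1 (-1)]
    · grind [h.max (-1) 1 0 1]
    · grind [h.max (-1) 1 1 0]
    · grind [h.max (-1) 1 2 (-1)]
  clear h
  grind (splits := 60)

set_option maxHeartbeats 2000000 in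
theorem orthant_ppnp (a x0 x1 x2 x3 : ℤ) (ha : 2 ≤ a) (h : Uncovered a x0 x1 x2 x3)
    (h0 : 0 ≤ x0) (h1 : 0 ≤ x1) (h2 : x2 ≤ 0) (h3 : 0 ≤ x3)
    (hs : x0 + x1 + (-x2) + x3 = 2 * a) : False := by
  obtain ⟨g0, g1, g2, g3, g4, g5, g6, g7, g8, g9, g10, g11, g12⟩ :
      (2 * (min (-x2) (2 * a)) ≤ 4 * a - 2) ∧
      (2 * (min x1 (2 * a)) ≤ 2 * a + 2) ∧
      (2 * (min x0 (1) + min x1 (1) + min (-x2) (2 * a - 1) + min x3 (1)) ≤ 2 * a + 2) ∧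
      (2 * (min x0 (1) + min x1 (1) + min x3 (2 * a - 1)) ≤ 2 * a + 2) ∧
      (2 * (min x0 (2 * a)) ≤ 2 * a + 2) ∧
      (2 * (min x1 (a) + min (-x2) (a)) ≤ 4 * a - 1) ∧
      (2 * (min (-x2) (a - 1) + min x3 (3 * a)) ≤ 6 * a - 5) ∧
      (2 * (min x0 (a) + min (-x2) (a)) ≤ 4 * a - 1) ∧
      (2 * (min (-x2) (a) + min x3 (a + 1)) ≤ 4 * a - 1) ∧
      (2 * (min x0 (a) + min x1 (a) + min (-x2) (a - 1)) ≤ 4 * a - 1) ∧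
      (2 * (min x0 (a + 1) + min (-x2) (a - 1) + min x3 (a)) ≤ 4 * a - 1) ∧
      (2 * (min x1 (a + 1) + min (-x2) (a - 1) + min x3 (a)) ≤ 4 * a - 1) ∧
      (2 * (min x0 (a + 1) + min x1 (a + 1) + min (-x2) (a - 2) + min x3 (a - 1)) ≤ 4 * a - 1) := by
    and_intros
    · grind [h.max 1 0 1 (-2)]
    · grind [h.max 0 1 1 0]
    · grind [h.max 1 0 0 (-1)]
    · grind [h.max 0 0 (-1) 1]
    · grind [h.max (-1) 1 0 0]
    · grind [h.max 1 0 1 (-1)]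
    · grind [h.max 1 (-1) (-2) 1]
    · grind [h.max 0 0 0 (-1)]
    · grind [h.max 1 (-1) (-1) 0]
    · grind [h.max 0 1 1 (-1)]
    · grind [h.max 0 0 (-1) 0]
    · grind [h.max 1 0 0 0]
    · grind [h.max 0 1 0 0]
  clear h
  grind (splits := 60)

set_option maxHeartbeats 2000000 in
theorem orthant_ppnn (a x0 x1 x2 x3 : ℤ) (ha : 2 ≤ a) (h : Uncovered a x0 x1 x2 x3)
    (h0 : 0 ≤ x0) (h1 : 0 ≤ x1) (h2 : x2 ≤ 0) (h3 : x3 ≤ 0)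
    (hs : x0 + x1 + (-x2) + (-x3) = 2 * a) : False := by
  obtain ⟨g0, g1, g2, g3, g4, g5, g6, g7, g8, g9, g10, g11, g12⟩ :
      (2 * (min x1 (2 * a) + min (-x3) (1)) ≤ 2 * a + 2) ∧
      (2 * (min x0 (1) + min x1 (1) + min (-x2) (2 * a - 1)) ≤ 2 * a + 2) ∧
      (2 * (min (-x2) (1) + min (-x3) (2 * a - 1)) ≤ 2 * a + 2) ∧
      (2 * (min x0 (2 * a) + min (-x3) (1)) ≤ 2 * a + 2) ∧
      (2 * (min (-x2) (2 * a) + min (-x3) (2 * a - 2)) ≤ 4 * a - 2) ∧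
      (2 * (min x0 (a + 1) + min (-x2) (a - 1)) ≤ 4 * a - 1) ∧
      (2 * (min x1 (a + 1) + min (-x2) (a - 1)) ≤ 4 * a - 1) ∧
      (2 * (min x1 (a) + min (-x2) (a) + min (-x3) (a - 1)) ≤ 4 * a - 1) ∧
      (2 * (min x0 (a) + min (-x2) (a) + min (-x3) (a - 1)) ≤ 4 * a - 1) ∧
      (2 * (min x0 (a + 1) + min x1 (a + 1) + min (-x2) (a - 2)) ≤ 4 * a - 1) ∧
      (2 * (min x0 (a - 1) + min x1 (a - 1) + min (-x3) (a + 1)) ≤ 4 * a - 1) ∧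
      (2 * (min x0 (a - 2) + min x1 (a - 2) + min (-x3) (3 * a)) ≤ 6 * a - 5) ∧
      (2 * (min x0 (a) + min x1 (a) + min (-x2) (a - 1) + min (-x3) (a)) ≤ 4 * a - 1) := by
    and_intros
    · grind [h.max 0 1 1 0]
    · grind [h.max 1 0 0 (-1)]
    · grind [h.max 0 0 1 (-1)]
    · grind [h.max (-1) 1 0 0]
    · grind [h.max 1 0 1 (-2)]
    · grind [h.max 0 0 (-1) 0]
    · grind [h.max 1 0 0 0]
    · grind [h.max 1 0 1 (-1)]
    · grind [h.max 0 0 0 (-1)]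
    · grind [h.max 0 1 0 0]
    · grind [h.max (-1) 1 1 0]
    · grind [h.max (-1) 1 2 (-1)]
    · grind [h.max 0 1 1 (-1)]
  clear h
  grind (splits := 60)

set_option maxHeartbeats 2000000 in
theorem orthant_pnpp (a x0 x1 x2 x3 : ℤ) (ha : 2 ≤ a) (h : Uncovered a x0 x1 x2 x3)
    (h0 : 0 ≤ x0) (h1 : x1 ≤ 0) (h2 : 0 ≤ x2) (h3 : 0 ≤ x3)
    (hs : x0 + (-x1) + x2 + x3 = 2 * a) : False := by
  obtain ⟨g0, g1, g2, g3, g4, g5, g6, g7, g8, g9, g10, g11⟩ :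
      (2 * (min (-x1) (2 * a) + min x3 (1)) ≤ 2 * a + 2) ∧
      (2 * (min (-x1) (1) + min x2 (2 * a - 1)) ≤ 2 * a + 2) ∧
      (2 * (min x0 (1) + min x2 (1) + min x3 (2 * a - 1)) ≤ 2 * a + 2) ∧
      (2 * (min x0 (2 * a) + min x2 (1)) ≤ 2 * a + 2) ∧
      (2 * (min (-x1) (a - 2) + min x3 (3 * a)) ≤ 6 * a - 5) ∧
      (2 * (min x2 (2 * a) + min x3 (2 * a - 2)) ≤ 4 * a - 2) ∧
      (2 * (min (-x1) (a - 1) + min x3 (a + 1)) ≤ 4 * a - 1) ∧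
      (2 * (min (-x1) (a) + min x2 (a - 1) + min x3 (a)) ≤ 4 * a - 1) ∧
      (2 * (min x0 (a + 1) + min (-x1) (a - 1) + min x3 (a)) ≤ 4 * a - 1) ∧
      (2 * (min x0 (a) + min x2 (a + 1) + min x3 (a - 2)) ≤ 4 * a - 1) ∧
      (2 * (min x0 (a - 1) + min (-x1) (a + 1) + min x2 (a - 1)) ≤ 4 * a - 1) ∧
      (2 * (min x0 (a) + min (-x1) (a) + min x2 (a) + min x3 (a - 1)) ≤ 4 * a - 1) := by
    and_intros
    · grind [h.max 0 (-1) (-1) 0]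
    · grind [h.max (-1) 0 0 1]
    · grind [h.max 0 0 (-1) 1]
    · grind [h.max (-1) 1 0 0]
    · grind [h.max 1 (-1) (-2) 1]
    · grind [h.max (-1) 0 (-1) 2]
    · grind [h.max 1 (-1) (-1) 0]
    · grind [h.max 0 (-1) (-1) 1]
    · grind [h.max 0 0 (-1) 0]
    · grind [h.max (-1) 1 0 1]
    · grind [h.max (-1) 0 0 0]
    · grind [h.max (-1) 0 (-1) 1]
  clear h
  grind (splits := 60)

set_option maxHeartbeats 2000000 in
theorem orthant_pnpn (a x0 x1 x2 x3 : ℤ) (ha : 2 ≤ a) (h : Uncovered a x0 x1 x2 x3)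
    (h0 : 0 ≤ x0) (h1 : x1 ≤ 0) (h2 : 0 ≤ x2) (h3 : x3 ≤ 0)
    (hs : x0 + (-x1) + x2 + (-x3) = 2 * a) : False := by
  obtain ⟨g0, g1, g2, g3, g4, g5, g6, g7, g8, g9, g10, g11, g12⟩ :
      (2 * (min (-x1) (1) + min (-x3) (2 * a - 1)) ≤ 2 * a + 2) ∧
      (2 * (min x2 (2 * a)) ≤ 4 * a - 2) ∧
      (2 * (min (-x1) (2 * a)) ≤ 2 * a + 2) ∧
      (2 * (min (-x1) (1) + min x2 (2 * a - 1) + min (-x3) (1)) ≤ 2 * a + 2) ∧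
      (2 * (min x0 (2 * a) + min x2 (1) + min (-x3) (1)) ≤ 2 * a + 2) ∧
      (2 * (min x0 (a) + min (-x3) (a)) ≤ 4 * a - 1) ∧
      (2 * (min x0 (a + 1) + min (-x1) (a - 1)) ≤ 4 * a - 1) ∧
      (2 * (min x0 (a) + min x2 (a + 1)) ≤ 4 * a - 1) ∧
      (2 * (min x0 (a) + min (-x1) (a) + min (-x3) (a - 1)) ≤ 4 * a - 1) ∧
      (2 * (min x0 (a) + min (-x1) (a) + min x2 (a)) ≤ 4 * a - 1) ∧
      (2 * (min x0 (a - 1) + min x2 (a) + min (-x3) (a + 1)) ≤ 4 * a - 1) ∧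
      (2 * (min x0 (a - 2) + min x2 (a - 1) + min (-x3) (3 * a)) ≤ 6 * a - 5) ∧
      (2 * (min x0 (a - 1) + min (-x1) (a + 1) + min x2 (a - 1) + min (-x3) (a)) ≤ 4 * a - 1) := by
    and_intros
    · grind [h.max 0 0 1 (-1)]
    · grind [h.max (-1) 0 (-1) 2]
    · grind [h.max 0 (-1) (-1) 0]
    · grind [h.max (-1) 0 0 1]
    · grind [h.max (-1) 1 0 0]
    · grind [h.max 0 1 1 (-1)]
    · grind [h.max 0 0 (-1) 0]
    · grind [h.max (-1) 1 0 1]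
    · grind [h.max 0 0 0 (-1)]
    · grind [h.max (-1) 0 (-1) 1]
    · grind [h.max (-1) 1 1 0]
    · grind [h.max (-1) 1 2 (-1)]
    · grind [h.max (-1) 0 0 0]
  clear h
  grind (splits := 60)

set_option maxHeartbeats 2000000 in
theorem orthant_pnnp (a x0 x1 x2 x3 : ℤ) (ha : 2 ≤ a) (h : Uncovered a x0 x1 x2 x3)
    (h0 : 0 ≤ x0) (h1 : x1 ≤ 0) (h2 : x2 ≤ 0) (h3 : 0 ≤ x3)
    (hs : x0 + (-x1) + (-x2) + x3 = 2 * a) : False := by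
  obtain ⟨g0, g1, g2, g3, g4, g5, g6, g7, g8, g9, g10, g11, g12⟩ :
      (2 * (min (-x2) (2 * a)) ≤ 4 * a - 2) ∧
      (2 * (min x0 (1) + min (-x2) (2 * a - 1) + min x3 (1)) ≤ 2 * a + 2) ∧
      (2 * (min (-x1) (2 * a) + min (-x2) (1) + min x3 (1)) ≤ 2 * a + 2) ∧
      (2 * (min x0 (1) + min x3 (2 * a - 1)) ≤ 2 * a + 2) ∧
      (2 * (min x0 (2 * a)) ≤ 2 * a + 2) ∧
      (2 * (min (-x1) (a) + min x3 (a)) ≤ 4 * a - 1) ∧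
      (2 * (min (-x1) (a) + min (-x2) (a + 1)) ≤ 4 * a - 1) ∧
      (2 * (min x0 (a - 1) + min (-x1) (a + 1)) ≤ 4 * a - 1) ∧
      (2 * (min (-x1) (a - 2) + min (-x2) (a - 1) + min x3 (3 * a)) ≤ 6 * a - 5) ∧
      (2 * (min x0 (a) + min (-x1) (a) + min (-x2) (a)) ≤ 4 * a - 1) ∧
      (2 * (min (-x1) (a - 1) + min (-x2) (a) + min x3 (a + 1)) ≤ 4 * a - 1) ∧
      (2 * (min x0 (a) + min (-x1) (a) + min x3 (a - 1)) ≤ 4 * a - 1) ∧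
      (2 * (min x0 (a + 1) + min (-x1) (a - 1) + min (-x2) (a - 1) + min x3 (a)) ≤ 4 * a - 1) := by
    and_intros
    · grind [h.max 1 0 1 (-2)]
    · grind [h.max 1 0 0 (-1)]
    · grind [h.max 0 (-1) (-1) 0]
    · grind [h.max 0 0 (-1) 1]
    · grind [h.max (-1) 1 0 0]
    · grind [h.max 0 (-1) (-1) 1]
    · grind [h.max 1 (-1) 0 (-1)]
    · grind [h.max (-1) 0 0 0]
    · grind [h.max 1 (-1) (-2) 1]
    · grind [h.max 0 0 0 (-1)]
    · grind [h.max 1 (-1) (-1) 0]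
    · grind [h.max (-1) 0 (-1) 1]
    · grind [h.max 0 0 (-1) 0]
  clear h
  grind (splits := 60)

set_option maxHeartbeats 2000000 in
theorem orthant_pnnn (a x0 x1 x2 x3 : ℤ) (ha : 2 ≤ a) (h : Uncovered a x0 x1 x2 x3)
    (h0 : 0 ≤ x0) (h1 : x1 ≤ 0) (h2 : x2 ≤ 0) (h3 : x3 ≤ 0)
    (hs : x0 + (-x1) + (-x2) + (-x3) = 2 * a) : False := by
  obtain ⟨g0, g1, g2, g3, g4, g5, g6, g7, g8, g9, g10, g11⟩ :
      (2 * (min x0 (1) + min (-x2) (2 * a - 1)) ≤ 2 * a + 2) ∧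
      (2 * (min (-x1) (2 * a) + min (-x2) (1)) ≤ 2 * a + 2) ∧
      (2 * (min (-x1) (1) + min (-x2) (1) + min (-x3) (2 * a - 1)) ≤ 2 * a + 2) ∧
      (2 * (min x0 (2 * a) + min (-x3) (1)) ≤ 2 * a + 2) ∧
      (2 * (min (-x2) (2 * a) + min (-x3) (2 * a - 2)) ≤ 4 * a - 2) ∧
      (2 * (min x0 (a - 1) + min (-x3) (a + 1)) ≤ 4 * a - 1) ∧
      (2 * (min x0 (a - 2) + min (-x3) (3 * a)) ≤ 6 * a - 5) ∧
      (2 * (min (-x1) (a) + min (-x2) (a + 1) + min (-x3) (a - 2)) ≤ 4 * a - 1) ∧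
      (2 * (min x0 (a) + min (-x2) (a - 1) + min (-x3) (a)) ≤ 4 * a - 1) ∧
      (2 * (min x0 (a + 1) + min (-x1) (a - 1) + min (-x2) (a - 1)) ≤ 4 * a - 1) ∧
      (2 * (min x0 (a - 1) + min (-x1) (a + 1) + min (-x3) (a)) ≤ 4 * a - 1) ∧
      (2 * (min x0 (a) + min (-x1) (a) + min (-x2) (a) + min (-x3) (a - 1)) ≤ 4 * a - 1) := by
    and_intros
    · grind [h.max 1 0 0 (-1)]
    · grind [h.max 0 (-1) (-1) 0]
    · grind [h.max 0 0 1 (-1)]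
    · grind [h.max (-1) 1 0 0]
    · grind [h.max 1 0 1 (-2)]
    · grind [h.max (-1) 1 1 0]
    · grind [h.max (-1) 1 2 (-1)]
    · grind [h.max 1 (-1) 0 (-1)]
    · grind [h.max 0 1 1 (-1)]
    · grind [h.max 0 0 (-1) 0]
    · grind [h.max (-1) 0 0 0]
    · grind [h.max 0 0 0 (-1)]
  clear h
  grind (splits := 60)

theorem covered_step (a x0 x1 x2 x3 : ℤ) (ha : 2 ≤ a)
    (hs : |x0| + |x1| + |x2| + |x3| = 2 * a) : ¬ Uncovered a x0 x1 x2 x3 := by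
  have key : ∀ x0 x1 x2 x3 : ℤ, 0 ≤ x0 → |x0| + |x1| + |x2| + |x3| = 2 * a →
      ¬ Uncovered a x0 x1 x2 x3 := by
    intro x0 x1 x2 x3 h0 hs h
    rw [abs_of_nonneg h0] at hs
    rcases le_total 0 x1 with h1 | h1 <;> rcases le_total 0 x2 with h2 | h2 <;>
      rcases le_total 0 x3 with h3 | h3 <;>
      simp only [abs_of_nonneg, abs_of_nonpos, h1, h2, h3] at hs
    · exact orthant_pppp a x0 x1 x2 x3 ha h h0 h1 h2 h3 hs
    · exact orthant_pppn a x0 x1 x2 x3 ha h h0 h1 h2 h3 hs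
    · exact orthant_ppnp a x0 x1 x2 x3 ha h h0 h1 h2 h3 hs
    · exact orthant_ppnn a x0 x1 x2 x3 ha h h0 h1 h2 h3 hs
    · exact orthant_pnpp a x0 x1 x2 x3 ha h h0 h1 h2 h3 hs
    · exact orthant_pnpn a x0 x1 x2 x3 ha h h0 h1 h2 h3 hs
    · exact orthant_pnnp a x0 x1 x2 x3 ha h h0 h1 h2 h3 hs
    · exact orthant_pnnn a x0 x1 x2 x3 ha h h0 h1 h2 h3 hs
  rcases le_total 0 x0 with h0 | h0
  · exact key x0 x1 x2 x3 h0 hs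
  · intro h
    exact key (-x0) (-x1) (-x2) (-x3) (by omega) (by simpa only [abs_neg] using hs) h.neg

theorem not_uncovered_of_le (a x0 x1 x2 x3 : ℤ) (ha : 2 ≤ a)
    (hs : |x0| + |x1| + |x2| + |x3| ≤ 2 * a) : ¬ Uncovered a x0 x1 x2 x3 := by
  rcases hs.lt_or_eq with hs | hs
  · intro h
    have := h 0 0 0 0
    simp at this
    omega
  · exact covered_step a x0 x1 x2 x3 ha hs

/-- If a point is covered, then so is every point at distance at most `1` from it. -/
theorem covered_near (a x0 x1 x2 x3 y0 y1 y2 y3 : ℤ) (ha : 2 ≤ a)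
    (hy : ¬ Uncovered a y0 y1 y2 y3)
    (hd : |x0 - y0| + |x1 - y1| + |x2 - y2| + |x3 - y3| ≤ 1) : ¬ Uncovered a x0 x1 x2 x3 := by
  intro hx
  apply hy
  intro c1 c2 c3 c4
  by_contra hc
  push Not at hc
  set w0 := c1 * (-a + 1) + c2 * (a + 1) + c3 * (-a - 1) + c4 * (-a) with e0
  set w1 := c1 * (a + 1) + c2 * (a + 1) + c3 * (a - 1) + c4 * a with e1
  set w2 := c1 * (-a + 1) + c2 * (-a + 2) + c3 * (a - 1) + c4 * a with e2
  set w3 := c1 * a + c2 * (a - 1) + c3 * (-a) + c4 * (a - 1) with e3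
  have t0 := abs_sub_le x0 y0 w0
  have t1 := abs_sub_le x1 y1 w1
  have t2 := abs_sub_le x2 y2 w2
  have t3 := abs_sub_le x3 y3 w3
  refine not_uncovered_of_le a (x0 - w0) (x1 - w1) (x2 - w2) (x3 - w3) ha (by linarith) ?_
  intro d1 d2 d3 d4
  have := hx (c1 + d1) (c2 + d2) (c3 + d3) (c4 + d4)
  have r : ∀ {x w d e : ℤ}, e = w + d → |x - e| = |x - w - d| := by
    intro x w d e h
    rw [h, sub_sub]
  refine this.trans_eq (congrArg₂ _ (congrArg₂ _ (congrArg₂ _ (r ?_) (r ?_)) (r ?_)) (r ?_)) <;>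
    simp only [e0, e1, e2, e3] <;> ring

theorem all_covered (a : ℤ) (ha : 2 ≤ a) (n : ℕ) : ∀ x0 x1 x2 x3 : ℤ,
    |x0| + |x1| + |x2| + |x3| ≤ n → ¬ Uncovered a x0 x1 x2 x3 := by
  induction n with
  | zero =>
    intro x0 x1 x2 x3 h
    exact not_uncovered_of_le a x0 x1 x2 x3 ha (by push_cast at h; linarith)
  | succ n ih =>
    intro x0 x1 x2 x3 h
    push_cast at h
    have toward : ∀ x : ℤ, x ≠ 0 → ∃ y : ℤ, |x - y| = 1 ∧ |y| = |x| - 1 := by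
      intro x hx
      rcases lt_or_gt_of_ne hx with hx | hx
      · exact ⟨x + 1, by simp, by rw [abs_of_nonpos (by omega), abs_of_neg hx]; ring⟩
      · exact ⟨x - 1, by simp, by rw [abs_of_nonneg (by omega), abs_of_pos hx]⟩
    by_cases z0 : x0 = 0
    · by_cases z1 : x1 = 0
      · by_cases z2 : x2 = 0
        · by_cases z3 : x3 = 0
          · subst z0 z1 z2 z3
            exact not_uncovered_of_le a 0 0 0 0 ha (by simp; omega)
          · obtain ⟨y, hy, hy'⟩ := toward x3 z3
            exact covered_near a x0 x1 x2 x3 x0 x1 x2 y ha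
              (ih _ _ _ _ (by linarith)) (by simp [hy])
        · obtain ⟨y, hy, hy'⟩ := toward x2 z2
          exact covered_near a x0 x1 x2 x3 x0 x1 y x3 ha
            (ih _ _ _ _ (by linarith)) (by simp [hy])
      · obtain ⟨y, hy, hy'⟩ := toward x1 z1
        exact covered_near a x0 x1 x2 x3 x0 y x2 x3 ha
          (ih _ _ _ _ (by linarith)) (by simp [hy])
    · obtain ⟨y, hy, hy'⟩ := toward x0 z0
      exact covered_near a x0 x1 x2 x3 y x1 x2 x3 ha
        (ih _ _ _ _ (by linarith)) (by simp [hy])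

/-- For odd `k ≥ 3`, `a = (k+1)/2`, the lattice `L` spanned by the four given vectors
satisfies `S_k + L = ℤ⁴`: every point of `ℤ⁴` is within `l¹`-distance `k` of `L`. -/
theorem lattice_covers_odd (k a : ℤ) (hk : 3 ≤ k) (hko : Odd k) (ha : a = (k + 1) / 2)
    (v₁ v₂ v₃ v₄ : Fin 4 → ℤ)
    (hv₁ : v₁ = ![-a + 1, a + 1, -a + 1, a])
    (hv₂ : v₂ = ![a + 1, a + 1, -a + 2, a - 1])
    (hv₃ : v₃ = ![-a - 1, a - 1, a - 1, -a])
    (hv₄ : v₄ = ![-a, a, a, a - 1])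
    (L : Submodule ℤ (Fin 4 → ℤ))
    (hL : L = Submodule.span ℤ {v₁, v₂, v₃, v₄}) :
    ∀ x : Fin 4 → ℤ, ∃ w ∈ L,
      |x 0 - w 0| + |x 1 - w 1| + |x 2 - w 2| + |x 3 - w 3| ≤ k := by
  intro x
  have ha2 : 2 ≤ a := by omega
  have hka : k = 2 * a - 1 := by obtain ⟨m, hm⟩ := hko; omega
  have hx := all_covered a ha2 (|x 0| + |x 1| + |x 2| + |x 3|).toNat (x 0) (x 1) (x 2) (x 3)
    (Int.self_le_toNat _)
  unfold Uncovered at hx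
  push Not at hx
  obtain ⟨c1, c2, c3, c4, hc⟩ := hx
  have m : ∀ v ∈ ({v₁, v₂, v₃, v₄} : Set (Fin 4 → ℤ)), ∀ c : ℤ, c • v ∈ L := by
    intro v hv c
    rw [hL]
    exact Submodule.smul_mem _ _ (Submodule.subset_span hv)
  refine ⟨c1 • v₁ + c2 • v₂ + c3 • v₃ + c4 • v₄,
    L.add_mem (L.add_mem (L.add_mem (m v₁ (by simp) c1) (m v₂ (by simp) c2))
      (m v₃ (by simp) c3)) (m v₄ (by simp) c4), ?_⟩
  have hc' := Int.le_sub_one_of_lt hc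
  rw [hka]
  subst hv₁ hv₂ hv₃ hv₄
  simpa using hc'
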